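/- Sequential composition of probabilistic automata satisfies the unit and left-zero laws up to simulation equivalence: for every probabilistic automaton P, P ≡ P · 1, P ≡ 1 · P, and 0 ≡ 0 · P, where 1 is the skip automaton and 0 is the deadlock automaton. -/

import Mathlib

open scoped ENNReal

namespace PCKA

/-- A probabilistic automaton over the (non-silent) action alphabet `α`, with state
space `σ`.  Transition labels are `Option α`, where `none` plays the role of the
silent action `τ`; `trans x a μ` means `x —a→ μ` where `μ` is a (countably
supported) probability distribution over states, `init` is the initial
distribution and `final` the set of final states. -/
structure PAut (α : Type) (σ : Type) where
  trans : σ → Option α → PMF σ → Prop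
  init : PMF σ
  final : Set σ

/-- The lifting `S̄ ⊆ D(X) × D(Y)` of a relation `S ⊆ X × D(Y)`: `μ S̄ ν` iff there
are weights `p n` summing to `1`, states `x n` and distributions `νs n` with
`μ = Σ_n p n · δ_{x n}`, `x n S νs n` for each `n`, and `ν = Σ_n p n · νs n`. -/
def Lift {X Y : Type} (S : X → PMF Y → Prop) (μ : PMF X) (ν : PMF Y) : Prop :=
  ∃ (p : ℕ → ℝ≥0∞) (x : ℕ → X) (νs : ℕ → PMF Y),
    (∑' n, p n) = 1 ∧
    (∀ s, μ s = ∑' n, p n * (PMF.pure (x n)) s) ∧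
    (∀ n, S (x n) (νs n)) ∧
    (∀ t, ν t = ∑' n, p n * (νs n) t)

/-- The double lifting `T̿ ⊆ D(X) × D(Z)` of a relation `T ⊆ X × Z`, via a weight
function `w`. -/
def DLift {X Z : Type} (T : X → Z → Prop) (μ : PMF X) (ψ : PMF Z) : Prop :=
  ∃ w : X → Z → ℝ≥0∞,
    (∀ x z, 0 < w x z → T x z) ∧
    (∀ x, (∑' z, w x z) = μ x) ∧
    (∀ z, (∑' x, w x z) = ψ z)

/-- Flattening `π : D(D(Y)) → D(Y)`, `π(ψ) = Σ_{ν} ψ(ν)·ν`. -/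
noncomputable def flat {Y : Type} (ψ : PMF (PMF Y)) : PMF Y := ψ.bind id

/-- Single transition step, with the τ-transitions extended by reflexivity
(`x —τ→ δ_x` is always allowed). -/
def step {α σ : Type} (P : PAut α σ) (a : Option α) (x : σ) (μ : PMF σ) : Prop :=
  P.trans x a μ ∨ (a = none ∧ μ = PMF.pure x)

/-- Weak internal moves `⇒`: the reflexive-transitive closure of the lifted
(extended) τ-transition relation on distributions. -/
def WeakTau {α σ : Type} (P : PAut α σ) : PMF σ → PMF σ → Prop :=
  Relation.ReflTransGen (Lift (step P none))

/-- Weak `a`-transition `μ ⇒^a μ'`: `μ ⇒ μ₁ —ā→ μ₂ ⇒ μ'`. -/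
def WeakStep {α σ : Type} (P : PAut α σ) (a : Option α) (μ μ' : PMF σ) : Prop :=
  ∃ μ₁ μ₂, WeakTau P μ μ₁ ∧ Lift (step P a) μ₁ μ₂ ∧ WeakTau P μ₂ μ'

/-- A probabilistic simulation from `P` to `Q` (Deng et al. style). -/
structure IsSimulation {α σ τ' : Type} (P : PAut α σ) (Q : PAut α τ')
    (S : σ → PMF τ' → Prop) : Prop where
  init : ∃ ν₀', WeakTau Q Q.init ν₀' ∧ Lift S P.init ν₀'
  step : ∀ x a μ', P.trans x a μ' → ∀ ν, S x ν →
    ∃ ν', WeakStep Q a ν ν' ∧ Lift S μ' ν'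
  final : ∀ x ν, x ∈ P.final → S x ν →
    ∃ ν', WeakTau Q ν ν' ∧ ∀ y ∈ ν'.support, y ∈ Q.final

/-- A probabilistic weak forward simulation from `P` to `Q` (Segala style). -/
structure IsWFSimulation {α σ τ' : Type} (P : PAut α σ) (Q : PAut α τ')
    (S : σ → PMF τ' → Prop) : Prop where
  init : ∃ ψ₀ : PMF (PMF τ'), DLift S P.init ψ₀ ∧ WeakTau Q Q.init (flat ψ₀)
  step : ∀ x a μ', P.trans x a μ' → ∀ ν, S x ν →
    ∃ ψ : PMF (PMF τ'), WeakStep Q a ν (flat ψ) ∧ DLift S μ' ψ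
  final : ∀ x ν, x ∈ P.final → S x ν →
    ∃ ψ : PMF (PMF τ'), (∀ ρ ∈ ψ.support, ∀ y ∈ ρ.support, y ∈ Q.final) ∧
      WeakTau Q ν (flat ψ)

/-- `P ≤ Q`: there exists a probabilistic simulation from `P` to `Q`. -/
def Sim {α σ τ' : Type} (P : PAut α σ) (Q : PAut α τ') : Prop :=
  ∃ S, IsSimulation P Q S

/-- Simulation equivalence `P ≡ Q`. -/
def SimEquiv {α σ τ' : Type} (P : PAut α σ) (Q : PAut α τ') : Prop :=
  Sim P Q ∧ Sim Q P

/-- Convex combination `p·μ + (1−p)·ν` of two distributions. -/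
noncomputable def mix {X : Type} (p : ℝ≥0∞) (hp : p ≤ 1) (μ ν : PMF X) : PMF X :=
  ⟨fun x => p * μ x + (1 - p) * ν x, by
    refine ENNReal.summable.hasSum_iff.mpr ?_
    rw [ENNReal.tsum_add, ENNReal.tsum_mul_left, ENNReal.tsum_mul_left,
      μ.tsum_coe, ν.tsum_coe, mul_one, mul_one, add_tsub_cancel_of_le hp]⟩

/-- Product distribution `μ × ν`, with `(μ × ν)(x,y) = μ(x)·ν(y)`. -/
noncomputable def pprod {X Y : Type} (μ : PMF X) (ν : PMF Y) : PMF (X × Y) :=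
  μ.bind fun x => ν.map fun y => (x, y)

/-- The skip automaton `1`: one state, no transitions, that state is final. -/
noncomputable def skip (α : Type) : PAut α Unit :=
  ⟨fun _ _ _ => False, PMF.pure (), Set.univ⟩

/-- The deadlock automaton `0`: one state, no transitions, no final state. -/
noncomputable def deadlock (α : Type) : PAut α Unit :=
  ⟨fun _ _ _ => False, PMF.pure (), ∅⟩

/-- Nondeterministic choice `P + Q`: disjoint union of the two automata (realised
by the sum type) plus a fresh initial state `z = none` with `z —τ→ μ₀` and
`z —τ→ ν₀`. -/
noncomputable def nchoice {α σ τ' : Type} (P : PAut α σ) (Q : PAut α τ') :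
    PAut α (Option (σ ⊕ τ')) where
  trans := fun s a μ =>
    match s with
    | none => a = none ∧
        (μ = P.init.map (fun x => some (Sum.inl x)) ∨
         μ = Q.init.map (fun y => some (Sum.inr y)))
    | some (Sum.inl x) => ∃ μ', P.trans x a μ' ∧ μ = μ'.map (fun x => some (Sum.inl x))
    | some (Sum.inr y) => ∃ ν', Q.trans y a ν' ∧ μ = ν'.map (fun y => some (Sum.inr y))
  init := PMF.pure none
  final := {s | (∃ x ∈ P.final, s = some (Sum.inl x)) ∨ (∃ y ∈ Q.final, s = some (Sum.inr y))}

/-- Sequential composition `P · Q`: disjoint union (realised by the sum type),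
with a τ-transition from each final state of `P` to the initial distribution of
`Q`; initial distribution that of `P`, final states those of `Q`. -/
noncomputable def pseq {α σ τ' : Type} (P : PAut α σ) (Q : PAut α τ') :
    PAut α (σ ⊕ τ') where
  trans := fun s a μ =>
    match s with
    | Sum.inl x =>
        (∃ μ', P.trans x a μ' ∧ μ = μ'.map Sum.inl) ∨
        (a = none ∧ x ∈ P.final ∧ μ = Q.init.map Sum.inr)
    | Sum.inr y => ∃ ν', Q.trans y a ν' ∧ μ = ν'.map Sum.inr
  init := P.init.map Sum.inl
  final := {s | ∃ y ∈ Q.final, s = Sum.inr y}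

/-- Kleene star `P*`: a fresh state `z = none` which is initial and the only
final state, with `z —τ→ μ₀` and `x —τ→ δ_z` for each final state `x` of `P`. -/
noncomputable def pstar {α σ : Type} (P : PAut α σ) : PAut α (Option σ) where
  trans := fun s a μ =>
    match s with
    | none => a = none ∧ μ = P.init.map some
    | some x =>
        (∃ μ', P.trans x a μ' ∧ μ = μ'.map some) ∨
        (a = none ∧ x ∈ P.final ∧ μ = PMF.pure none)
  init := PMF.pure none
  final := {none}

/-- Probabilistic choice `P ⊕_p Q`: disjoint union with initial distribution
`p·μ₀ + (1−p)·ν₀`. -/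
noncomputable def pchoice {α σ τ' : Type} (p : ℝ≥0∞) (hp : p ≤ 1)
    (P : PAut α σ) (Q : PAut α τ') : PAut α (σ ⊕ τ') where
  trans := fun s a μ =>
    match s with
    | Sum.inl x => ∃ μ', P.trans x a μ' ∧ μ = μ'.map Sum.inl
    | Sum.inr y => ∃ ν', Q.trans y a ν' ∧ μ = ν'.map Sum.inr
  init := mix p hp (P.init.map Sum.inl) (Q.init.map Sum.inr)
  final := {s | (∃ x ∈ P.final, s = Sum.inl x) ∨ (∃ y ∈ Q.final, s = Sum.inr y)}

/-- CSP-style parallel composition `P ∥_A Q` synchronising on the frame `A`: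
actions in `A` must be performed jointly, all other actions (including τ) are
interleaved. -/
noncomputable def par {α σ τ' : Type} (A : Set α) (P : PAut α σ) (Q : PAut α τ') :
    PAut α (σ × τ') where
  trans := fun s a μπ => ∃ μ ν, μπ = pprod μ ν ∧
    ((∃ b ∈ A, a = some b ∧ P.trans s.1 a μ ∧ Q.trans s.2 a ν) ∨
     ((∀ b ∈ A, a ≠ some b) ∧ P.trans s.1 a μ ∧ ν = PMF.pure s.2) ∨
     ((∀ b ∈ A, a ≠ some b) ∧ Q.trans s.2 a ν ∧ μ = PMF.pure s.1))
  init := pprod P.init Q.init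
  final := {s | s.1 ∈ P.final ∧ s.2 ∈ Q.final}

theorem exists_enum {X : Type} (μ : PMF X) :
    ∃ (p : ℕ → ℝ≥0∞) (x : ℕ → X), (∀ n, x n ∈ μ.support) ∧
      ∀ F : X → ℝ≥0∞, (∑' n, p n * F (x n)) = ∑' a, μ a * F a := by
  classical
  haveI : Countable μ.support := μ.support_countable.to_subtype
  letI : Encodable μ.support := Encodable.ofCountable _
  obtain ⟨x0, hx0⟩ := μ.support_nonempty
  refine ⟨fun n => ((Encodable.decode₂ μ.support n).map fun y => μ y.1).getD 0,
    fun n => ((Encodable.decode₂ μ.support n).getD ⟨x0, hx0⟩).1,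
    fun n => ((Encodable.decode₂ μ.support n).getD ⟨x0, hx0⟩).2, fun F => ?_⟩
  rw [← (Encodable.encode_injective (α := μ.support)).tsum_eq]
  · simp only [Encodable.encodek₂, Option.map_some, Option.getD_some]
    refine (Subtype.val_injective (p := fun a => a ∈ μ.support)).tsum_eq
      (f := fun a => μ a * F a) ?_
    intro a ha
    refine ⟨⟨a, ?_⟩, rfl⟩
    rw [PMF.mem_support_iff]
    intro h
    exact ha (by simp [h])
  · intro n hn
    rcases h : Encodable.decode₂ μ.support n with _ | y
    · exact absurd (by simp [h]) hn
    · exact ⟨y, Encodable.decode₂_eq_some.1 h⟩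

theorem lift_map_bind {X Y Z : Type} (S : Z → PMF Y → Prop) (μ : PMF X) (g : X → Z)
    (f : X → PMF Y) (h : ∀ x ∈ μ.support, S (g x) (f x)) :
    Lift S (μ.map g) (μ.bind f) := by
  obtain ⟨p, x, hx, H⟩ := exists_enum μ
  refine ⟨p, fun n => g (x n), fun n => f (x n), ?_, fun s => ?_, fun n => h _ (hx n),
    fun t => ?_⟩
  · simpa [μ.tsum_coe] using H fun _ => 1
  · rw [H fun a => PMF.pure (g a) s, ← PMF.bind_pure_comp, PMF.bind_apply]
    rfl
  · rw [H fun a => f a t, PMF.bind_apply]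

theorem lift_map_map {X Y Z : Type} (S : Z → PMF Y → Prop) (μ : PMF X) (g : X → Z)
    (f : X → Y) (h : ∀ x ∈ μ.support, S (g x) (PMF.pure (f x))) :
    Lift S (μ.map g) (μ.map f) := by
  rw [← PMF.bind_pure_comp f]
  exact lift_map_bind S μ g _ h

theorem lift_pure {X Y : Type} (S : X → PMF Y → Prop) (x : X) (ν : PMF Y) (h : S x ν) :
    Lift S (PMF.pure x) ν := by
  have := lift_map_bind S (PMF.pure ()) (fun _ => x) (fun _ => ν) (fun _ _ => h)
  simpa [PMF.pure_map] using this

theorem lift_step_refl {α σ : Type} (P : PAut α σ) (μ : PMF σ) :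
    Lift (step P none) μ μ := by
  have := lift_map_map (step P none) μ id id (fun x _ => Or.inr ⟨rfl, rfl⟩)
  simpa [PMF.map_id] using this

theorem weakStep_refl {α σ : Type} (P : PAut α σ) (μ : PMF σ) : WeakStep P none μ μ :=
  ⟨μ, μ, .refl, lift_step_refl P μ, .refl⟩

theorem weakStep_pure {α σ : Type} (P : PAut α σ) (a : Option α) (x : σ) (μ : PMF σ)
    (h : P.trans x a μ) : WeakStep P a (PMF.pure x) μ :=
  ⟨_, _, .refl, lift_pure _ _ _ (Or.inl h), .refl⟩

theorem weakTau_pure {α σ : Type} (P : PAut α σ) (x : σ) (μ : PMF σ)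
    (h : P.trans x none μ) : WeakTau P (PMF.pure x) μ :=
  .single (lift_pure _ _ _ (Or.inl h))

theorem sim_seq_skip {α σ : Type} (P : PAut α σ) : Sim P (pseq P (skip α)) := by
  have hl : ∀ μ : PMF σ, Lift (fun x ν => ν = PMF.pure (Sum.inl x : σ ⊕ Unit)) μ
      (μ.map Sum.inl) := fun μ => by
    simpa [PMF.map_id] using lift_map_map
      (fun x ν => ν = PMF.pure (Sum.inl x : σ ⊕ Unit)) μ id Sum.inl (fun _ _ => rfl)
  refine ⟨fun x ν => ν = PMF.pure (Sum.inl x), ⟨_, .refl, hl _⟩, ?_, ?_⟩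
  · rintro x a μ' h ν rfl
    exact ⟨μ'.map Sum.inl, weakStep_pure _ _ _ _ (Or.inl ⟨μ', h, rfl⟩), hl _⟩
  · rintro x ν hx rfl
    refine ⟨(PMF.pure ()).map Sum.inr, weakTau_pure _ _ _ (Or.inr ⟨rfl, hx, rfl⟩), ?_⟩
    intro y hy
    rw [PMF.pure_map, PMF.support_pure] at hy
    exact ⟨(), trivial, hy⟩

theorem seq_skip_sim {α σ : Type} (P : PAut α σ) : Sim (pseq P (skip α)) P := by
  let S : σ ⊕ Unit → PMF σ → Prop := fun s ν =>
    (∃ x, s = Sum.inl x ∧ ν = PMF.pure x) ∨ (s = Sum.inr () ∧ ∀ y ∈ ν.support, y ∈ P.final)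
  have hl : ∀ μ : PMF σ, Lift S (μ.map Sum.inl) μ := fun μ => by
    simpa [PMF.map_id] using lift_map_map S μ Sum.inl id (fun x _ => Or.inl ⟨x, rfl, rfl⟩)
  refine ⟨S, ⟨_, .refl, hl _⟩, ?_, ?_⟩
  · rintro s a μ' h ν (⟨x, rfl, rfl⟩ | ⟨rfl, -⟩)
    · rcases h with ⟨μ, h, rfl⟩ | ⟨rfl, hx, rfl⟩
      · exact ⟨μ, weakStep_pure _ _ _ _ h, hl _⟩
      · refine ⟨_, weakStep_refl _ _, ?_⟩
        change Lift S ((PMF.pure ()).map Sum.inr) _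
        rw [PMF.pure_map]
        refine lift_pure _ _ _ (Or.inr ⟨rfl, fun y hy => ?_⟩)
        rw [PMF.support_pure] at hy
        rwa [Set.mem_singleton_iff.1 hy]
    · obtain ⟨_, h, _⟩ := h
      exact h.elim
  · rintro s ν ⟨y, -, rfl⟩ (⟨x, h, -⟩ | ⟨-, h⟩)
    · cases h
    · exact ⟨ν, .refl, h⟩

theorem sim_skip_seq {α σ : Type} (P : PAut α σ) : Sim P (pseq (skip α) P) := by
  have hl : ∀ μ : PMF σ, Lift (fun x ν => ν = PMF.pure (Sum.inr x : Unit ⊕ σ)) μ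
      (μ.map Sum.inr) := fun μ => by
    simpa [PMF.map_id] using lift_map_map
      (fun x ν => ν = PMF.pure (Sum.inr x : Unit ⊕ σ)) μ id Sum.inr (fun _ _ => rfl)
  refine ⟨fun x ν => ν = PMF.pure (Sum.inr x), ⟨P.init.map Sum.inr, ?_, hl _⟩, ?_, ?_⟩
  · change WeakTau _ ((PMF.pure ()).map Sum.inl) _
    rw [PMF.pure_map]
    exact weakTau_pure _ _ _ (Or.inr ⟨rfl, trivial, rfl⟩)
  · rintro x a μ' h ν rfl
    exact ⟨μ'.map Sum.inr, weakStep_pure _ _ _ _ ⟨μ', h, rfl⟩, hl _⟩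
  · rintro x ν hx rfl
    refine ⟨_, .refl, ?_⟩
    intro y hy
    rw [PMF.support_pure] at hy
    exact ⟨x, hx, hy⟩

theorem skip_seq_sim {α σ : Type} (P : PAut α σ) : Sim (pseq (skip α) P) P := by
  let S : Unit ⊕ σ → PMF σ → Prop := fun s ν =>
    (s = Sum.inl () ∧ ν = P.init) ∨ (∃ y, s = Sum.inr y ∧ ν = PMF.pure y)
  have hl : ∀ μ : PMF σ, Lift S (μ.map Sum.inr) μ := fun μ => by
    simpa [PMF.map_id] using lift_map_map S μ Sum.inr id (fun x _ => Or.inr ⟨x, rfl, rfl⟩)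
  refine ⟨S, ⟨P.init, .refl, ?_⟩, ?_, ?_⟩
  · change Lift S ((PMF.pure ()).map Sum.inl) _
    rw [PMF.pure_map]
    exact lift_pure _ _ _ (Or.inl ⟨rfl, rfl⟩)
  · rintro s a μ' h ν (⟨rfl, rfl⟩ | ⟨y, rfl, rfl⟩)
    · rcases h with ⟨_, h, _⟩ | ⟨rfl, -, rfl⟩
      · exact h.elim
      · exact ⟨_, weakStep_refl _ _, hl _⟩
    · obtain ⟨μ, h, rfl⟩ := h
      exact ⟨μ, weakStep_pure _ _ _ _ h, hl _⟩
  · rintro s ν ⟨y, hy, rfl⟩ (⟨h, -⟩ | ⟨z, h, rfl⟩)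
    · cases h
    · cases h
      refine ⟨_, .refl, fun z hz => ?_⟩
      rw [PMF.support_pure] at hz
      rwa [Set.mem_singleton_iff.1 hz]

theorem deadlock_equiv {α σ : Type} (P : PAut α σ) :
    SimEquiv (deadlock α) (pseq (deadlock α) P) := by
  constructor
  · refine ⟨fun _ _ => True, ⟨_, .refl, lift_pure _ _ _ trivial⟩, ?_, ?_⟩
    · intro x a μ' h
      exact h.elim
    · intro x ν h
      exact h.elim
  · refine ⟨fun s _ => s = Sum.inl (), ⟨_, .refl, ?_⟩, ?_, ?_⟩
    · change Lift _ ((PMF.pure ()).map Sum.inl) _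
      rw [PMF.pure_map]
      exact lift_pure _ _ _ rfl
    · rintro s a μ' h ν rfl
      rcases h with ⟨_, h, _⟩ | ⟨_, h, _⟩ <;> exact h.elim
    · rintro s ν ⟨y, -, rfl⟩ h
      cases h

/-- unit and left-zero laws for sequential composition up to
simulation equivalence: `P ≡ P · 1`, `P ≡ 1 · P` and `0 ≡ 0 · P`. -/
theorem seq_unit_and_zero {α σ : Type} (P : PAut α σ) :
    SimEquiv P (pseq P (skip α)) ∧
    SimEquiv P (pseq (skip α) P) ∧
    SimEquiv (deadlock α) (pseq (deadlock α) P) := by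
  exact ⟨⟨sim_seq_skip P, seq_skip_sim P⟩, ⟨sim_skip_seq P, skip_seq_sim P⟩, deadlock_equiv P⟩

end PCKA
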